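/- A countable union of pluripolar subsets of ℂ^n is pluripolar. -/

import Mathlib

open Metric Set MeasureTheory Filter Topology

noncomputable section

/-- Harmonicity on a set, expressed by continuity together with the circle mean value
property on all closed balls contained in the set. -/
def HarmonicMVP (h : ℂ → ℝ) (s : Set ℂ) : Prop :=
  ContinuousOn h s ∧
  ∀ c : ℂ, ∀ r : ℝ, 0 < r → closedBall c r ⊆ s →
    h c = (2 * Real.pi)⁻¹ *
      ∫ θ in (0:ℝ)..(2 * Real.pi), h (c + r * Complex.exp (θ * Complex.I))

/-- Subharmonicity of a `[-∞, ∞)`-valued function (modeled as `EReal`-valued) on a set: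
upper semicontinuity together with the harmonic majorant property: on every closed ball
contained in the set, `u` is dominated on the ball by every harmonic function dominating
it on the bounding circle. -/
def SubharmonicOn (u : ℂ → EReal) (U : Set ℂ) : Prop :=
  UpperSemicontinuousOn u U ∧ (∀ z ∈ U, u z < ⊤) ∧
  ∀ c : ℂ, ∀ r : ℝ, 0 < r → closedBall c r ⊆ U →
    ∀ h : ℂ → ℝ, HarmonicMVP h (closedBall c r) →
      (∀ z ∈ sphere c r, u z ≤ (h z : EReal)) →
      ∀ z ∈ ball c r, u z ≤ (h z : EReal)

/-- A set `E ⊆ ℂ` is polar if it is contained in the `-∞` set of a subharmonic function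
on `ℂ` which is not identically `-∞`. -/
def PolarSet (E : Set ℂ) : Prop :=
  ∃ u : ℂ → EReal, SubharmonicOn u Set.univ ∧ ¬ (∀ z, u z = ⊥) ∧ ∀ z ∈ E, u z = ⊥

/-- Plurisubharmonicity on a subset of `ℂⁿ`: upper semicontinuity together with
subharmonicity of the restriction to every complex line. -/
def PlurisubharmonicOn {n : ℕ} (φ : (Fin n → ℂ) → EReal) (Ω : Set (Fin n → ℂ)) : Prop :=
  UpperSemicontinuousOn φ Ω ∧
  ∀ a b : Fin n → ℂ,
    SubharmonicOn (fun z : ℂ => φ (a + z • b)) {z : ℂ | a + z • b ∈ Ω}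

/-- A set `E ⊆ ℂⁿ` is pluripolar (global form, equivalent to the local one by
Josefson's theorem): it is contained in the `-∞` set of a plurisubharmonic function on
`ℂⁿ` which is not identically `-∞`. -/
def Pluripolar {n : ℕ} (E : Set (Fin n → ℂ)) : Prop :=
  ∃ φ : (Fin n → ℂ) → EReal, PlurisubharmonicOn φ Set.univ ∧
    ¬ (∀ z, φ z = ⊥) ∧ ∀ z ∈ E, φ z = ⊥

/-- The pluripolar hull `E*_Ω` of `E` relative to `Ω`. -/
def PluripolarHull {n : ℕ} (E Ω : Set (Fin n → ℂ)) : Set (Fin n → ℂ) :=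
  {z ∈ Ω | ∀ φ : (Fin n → ℂ) → EReal, PlurisubharmonicOn φ Ω →
    (∀ w ∈ E, φ w = ⊥) → φ z = ⊥}

/-!
The `-∞` set of a plurisubharmonic `φ ≢ -∞` is null: if `φ a ≠ -∞` then, by the sub-mean value
inequality, `φ` is finite almost everywhere on each circle `a + exp (iθ) b`, and Fubini applies.
If `φ i` is `-∞` on `E i`, there is therefore a point `a` with `φ i a ≠ -∞` for all `i`. Shift
and rescale each `φ i` to a `ψ i` with `ψ i ≤ 0` on the `i`-th member of a compact exhaustion and
`ψ i a ≥ -2 ^ (-i)`. Near any compact set the partial sums of `∑ i, ψ i` eventually decrease, so the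
limit is plurisubharmonic; it is not `-∞` at `a`, and it is `-∞` on every `E i`.

Since subharmonicity is defined by harmonic majorants, stability under sums is not immediate: a
majorant `h` with `u + v < h` on a circle is split by a continuous `g` with `u < g < h - v`, and `g`
is approximated there by real parts of polynomials, which are harmonic everywhere.
-/

section Semicontinuity

lemma exists_continuousMap_between {X : Type*} [TopologicalSpace X] [NormalSpace X]
    [ParacompactSpace X] {S : Set X} (hS : IsClosed S) {u w : X → EReal}
    (hu : UpperSemicontinuousOn u S) (hw : LowerSemicontinuousOn w S)
    (huw : ∀ x ∈ S, u x < w x) :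
    ∃ g : C(X, ℝ), ∀ x ∈ S, u x < g x ∧ (g x : EReal) < w x := by
  refine exists_continuous_forall_mem_convex_of_local_const
    (t := fun x => {s : ℝ | x ∈ S → u x < s ∧ (s : EReal) < w x}) (fun x => ?_) fun x => ?_
  · refine OrdConnected.convex ⟨fun s hs s' hs' y hy hx => ?_⟩
    exact ⟨(hs hx).1.trans_le (EReal.coe_le_coe_iff.2 hy.1),
      (EReal.coe_le_coe_iff.2 hy.2).trans_lt (hs' hx).2⟩
  · by_cases hx : x ∈ S
    · obtain ⟨s, hus, hsw⟩ := EReal.lt_iff_exists_real_btwn.1 (huw x hx)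
      refine ⟨s, ?_⟩
      filter_upwards [eventually_nhdsWithin_iff.1 (hu x hx s hus),
        eventually_nhdsWithin_iff.1 (hw x hx s hsw)] with y huy hwy hy
      exact ⟨huy hy, hwy hy⟩
    · refine ⟨0, ?_⟩
      filter_upwards [hS.isOpen_compl.mem_nhds hx] with y hy hyS
      exact absurd hyS hy

lemma exists_continuousMap_split {X : Type*} [TopologicalSpace X] [NormalSpace X]
    [ParacompactSpace X] {S : Set X} (hS : IsClosed S) {u v : X → EReal} {h : X → ℝ}
    (hu : UpperSemicontinuousOn u S) (hv : UpperSemicontinuousOn v S)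
    (hu_top : ∀ x ∈ S, u x < ⊤) (hv_top : ∀ x ∈ S, v x < ⊤)
    (hh : ContinuousOn h S) (huv : ∀ x ∈ S, u x + v x < h x) :
    ∃ g : C(X, ℝ), ∀ x ∈ S, u x < g x ∧ v x < ((h x - g x : ℝ) : EReal) := by
  have hsub : LowerSemicontinuousOn (fun x => (h x : EReal) - v x) S :=
    (continuous_coe_real_ereal.comp_continuousOn hh).lowerSemicontinuousOn.add'
      (continuous_neg.comp_upperSemicontinuousOn_antitone hv fun _ _ => EReal.neg_le_neg_iff.2)
      fun x _ => EReal.continuousAt_add (.inl (EReal.coe_ne_top _)) (.inl (EReal.coe_ne_bot _))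
  obtain ⟨g, hg⟩ := exists_continuousMap_between hS hu hsub fun x hx =>
    (EReal.lt_sub_iff_add_lt (.inr (hu_top x hx).ne) (.inl (hv_top x hx).ne)).2 (huv x hx)
  refine ⟨g, fun x hx => ⟨(hg x hx).1, ?_⟩⟩
  have hsum : (g x : EReal) + v x < h x := EReal.add_lt_of_lt_sub (hg x hx).2
  rw [EReal.coe_sub]
  refine (EReal.lt_sub_iff_add_lt (.inl (EReal.coe_ne_bot _)) (.inl (EReal.coe_ne_top _))).2 ?_
  rwa [add_comm]

lemma exists_forall_mem_lt_of_isGLB {X α ι : Type*} [TopologicalSpace X]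
    [LinearOrder α] [DenselyOrdered α] [Nonempty ι] [Preorder ι] [IsDirectedOrder ι]
    {K : Set X} (hK : IsCompact K) {u : ι → X → α} {v h : X → α}
    (hu : ∀ i, UpperSemicontinuousOn (u i) K) (hh : LowerSemicontinuousOn h K)
    (hanti : ∀ x ∈ K, Antitone fun i => u i x)
    (hv : ∀ x ∈ K, IsGLB (range fun i => u i x) (v x)) (hvh : ∀ x ∈ K, v x < h x) :
    ∃ i, ∀ x ∈ K, u i x < h x := by
  suffices H : ∃ i, ∀ x ∈ K, x ∈ K → u i x < h x from
    H.imp fun i hi x hx => hi x hx hx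
  refine hK.induction_on (p := fun s => ∃ i, ∀ x ∈ s, x ∈ K → u i x < h x)
    ⟨Classical.arbitrary ι, by simp⟩ (fun s t hst => Exists.imp fun i hi x hx => hi x (hst hx))
    ?_ fun x hx => ?_
  · rintro s t ⟨i, hi⟩ ⟨j, hj⟩
    obtain ⟨k, hik, hjk⟩ := exists_ge_ge i j
    refine ⟨k, fun x hx hxK => hx.elim (fun hxs => ?_) fun hxt => ?_⟩
    · exact (hanti x hxK hik).trans_lt (hi x hxs hxK)
    · exact (hanti x hxK hjk).trans_lt (hj x hxt hxK)
  · obtain ⟨_, ⟨i, rfl⟩, hi⟩ := (isGLB_lt_iff (hv x hx)).1 (hvh x hx)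
    obtain ⟨b, hub, hbh⟩ := exists_between hi
    exact ⟨_, (hu i x hx b hub).and (hh x hx b hbh), i, fun y hy _ => hy.1.trans hy.2⟩

lemma exists_real_forall_mem_lt {X : Type*} [TopologicalSpace X] {K : Set X}
    (hK : IsCompact K) {u : X → EReal} (hu : UpperSemicontinuousOn u K)
    (hu_top : ∀ x ∈ K, u x < ⊤) : ∃ M : ℝ, ∀ x ∈ K, u x < M := by
  obtain rfl | hne := K.eq_empty_or_nonempty
  · exact ⟨0, by simp⟩
  · obtain ⟨y, hy, hmax⟩ := hu.exists_isMaxOn hne hK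
    obtain ⟨M, hM, -⟩ := EReal.lt_iff_exists_real_btwn.1 (hu_top y hy)
    exact ⟨M, fun x hx => (hmax hx).trans_lt hM⟩

lemma upperSemicontinuousOn_of_isGLB {X ι α : Type*} [TopologicalSpace X] [LinearOrder α]
    {s : Set X} {u : ι → X → α} {v : X → α} (hu : ∀ i, UpperSemicontinuousOn (u i) s)
    (hv : ∀ x ∈ s, IsGLB (range fun i => u i x) (v x)) : UpperSemicontinuousOn v s := by
  intro x hx b hb
  obtain ⟨_, ⟨i, rfl⟩, hi⟩ := (isGLB_lt_iff (hv x hx)).1 hb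
  filter_upwards [hu i x hx b hi, self_mem_nhdsWithin] with y hy hys
  exact ((hv y hys).1 (mem_range_self i)).trans_lt hy

lemma upperSemicontinuousOn_of_forall_exists_isOpen {X α : Type*} [TopologicalSpace X]
    [Preorder α] {s : Set X} {u : X → α}
    (h : ∀ x ∈ s, ∃ V, IsOpen V ∧ x ∈ V ∧ UpperSemicontinuousOn u V) :
    UpperSemicontinuousOn u s := by
  intro x hx b hb
  obtain ⟨V, hVo, hxV, hV⟩ := h x hx
  have hx_nhds : ∀ᶠ y in 𝓝 x, u y < b := hVo.nhdsWithin_eq hxV ▸ hV x hxV b hb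
  exact hx_nhds.filter_mono nhdsWithin_le_nhds

lemma upperSemicontinuousOn_add {X : Type*} [TopologicalSpace X] {s : Set X} {u v : X → EReal}
    (hu : UpperSemicontinuousOn u s) (hv : UpperSemicontinuousOn v s)
    (hu_top : ∀ x ∈ s, u x < ⊤) (hv_top : ∀ x ∈ s, v x < ⊤) :
    UpperSemicontinuousOn (fun x => u x + v x) s :=
  hu.add' hv fun x hx => EReal.continuousAt_add (.inl (hu_top x hx).ne) (.inr (hv_top x hx).ne)

lemma upperSemicontinuousOn_const_mul {X : Type*} [TopologicalSpace X] {s : Set X}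
    {u : X → EReal} (hu : UpperSemicontinuousOn u s) {t : ℝ} (ht : 0 < t) :
    UpperSemicontinuousOn (fun x => t * u x) s := by
  have hcont : Continuous fun e : EReal => (t : EReal) * e :=
    continuous_iff_continuousAt.2 fun e => EReal.Tendsto.const_mul tendsto_id
      (.inl (EReal.coe_ne_bot t)) (.inl (EReal.coe_ne_top t))
  exact hcont.comp_upperSemicontinuousOn hu fun _ _ h =>
    mul_le_mul_of_nonneg_left h (EReal.coe_nonneg.2 ht.le)

end Semicontinuity

section Harmonic

lemma harmonicMVP_iff_circleAverage_eq {h : ℂ → ℝ} {s : Set ℂ} :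
    HarmonicMVP h s ↔ ContinuousOn h s ∧
      ∀ c r, 0 < r → closedBall c r ⊆ s → Real.circleAverage h c r = h c := by
  simp only [HarmonicMVP, Real.circleAverage_def, circleMap, smul_eq_mul, eq_comm]

namespace HarmonicMVP

variable {h p : ℂ → ℝ} {s t : Set ℂ} {c : ℂ} {r : ℝ}

lemma circleAverage_eq (hh : HarmonicMVP h s) (hr : 0 < r) (hs : closedBall c r ⊆ s) :
    Real.circleAverage h c r = h c :=
  (harmonicMVP_iff_circleAverage_eq.1 hh).2 c r hr hs

lemma circleIntegrable (hh : HarmonicMVP h s) (hr : 0 ≤ r) (hs : closedBall c r ⊆ s) :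
    CircleIntegrable h c r :=
  (hh.1.mono (sphere_subset_closedBall.trans hs)).circleIntegrable hr

lemma mono (hh : HarmonicMVP h s) (hts : t ⊆ s) : HarmonicMVP h t :=
  ⟨hh.1.mono hts, fun c r hr ht => hh.2 c r hr (ht.trans hts)⟩

lemma const (k : ℝ) (s : Set ℂ) : HarmonicMVP (fun _ => k) s :=
  harmonicMVP_iff_circleAverage_eq.2
    ⟨continuousOn_const, fun c r _ _ => Real.circleAverage_const k c r⟩

lemma add (hh : HarmonicMVP h s) (hp : HarmonicMVP p s) :
    HarmonicMVP (fun z => h z + p z) s := by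
  refine harmonicMVP_iff_circleAverage_eq.2 ⟨hh.1.add hp.1, fun c r hr hs => ?_⟩
  rw [Real.circleAverage_fun_add (hh.circleIntegrable hr.le hs) (hp.circleIntegrable hr.le hs),
    hh.circleAverage_eq hr hs, hp.circleAverage_eq hr hs]

lemma sub (hh : HarmonicMVP h s) (hp : HarmonicMVP p s) :
    HarmonicMVP (fun z => h z - p z) s := by
  refine harmonicMVP_iff_circleAverage_eq.2 ⟨hh.1.sub hp.1, fun c r hr hs => ?_⟩
  rw [Real.circleAverage_fun_sub (hh.circleIntegrable hr.le hs) (hp.circleIntegrable hr.le hs),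
    hh.circleAverage_eq hr hs, hp.circleAverage_eq hr hs]

lemma div_const (hh : HarmonicMVP h s) (k : ℝ) : HarmonicMVP (fun z => h z / k) s := by
  refine harmonicMVP_iff_circleAverage_eq.2 ⟨hh.1.div_const k, fun c r hr hs => ?_⟩
  simp only [div_eq_inv_mul, ← smul_eq_mul]
  rw [Real.circleAverage_fun_smul, hh.circleAverage_eq hr hs]

lemma re {f : ℂ → ℂ} (hf : Differentiable ℂ f) (s : Set ℂ) :
    HarmonicMVP (fun z => (f z).re) s := by
  refine harmonicMVP_iff_circleAverage_eq.2
    ⟨(Complex.continuous_re.comp hf.continuous).continuousOn, fun c r _ _ => ?_⟩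
  exact InnerProductSpace.HarmonicOnNhd.circleAverage_eq fun z _ =>
    (hf.analyticAt z).harmonicAt_re

end HarmonicMVP

-- The factor `a` carries the statement through `fourier (-n) = conj (fourier n)`:
-- `re (a * conj w) = re (conj a * w)`.
lemma exists_polynomial_re_mul_eq {T : ℝ} {g : C(AddCircle T, ℂ)}
    (hg : g ∈ Submodule.span ℂ (range (@fourier T))) (a : ℂ) :
    ∃ P : Polynomial ℂ, ∀ x, (a * g x).re = (P.eval (AddCircle.toCircle x : ℂ)).re := by
  induction hg using Submodule.span_induction generalizing a with
  | mem g hg =>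
    obtain ⟨n, rfl⟩ := hg
    obtain ⟨k, rfl | rfl⟩ := Int.eq_nat_or_neg n
    · refine ⟨Polynomial.C a * Polynomial.X ^ k, fun x => ?_⟩
      simp [fourier_apply, AddCircle.toCircle_nsmul]
    · refine ⟨Polynomial.C (star a) * Polynomial.X ^ k, fun x => ?_⟩
      rw [fourier_neg, ← Complex.conj_re, map_mul, Complex.conj_conj]
      simp [fourier_apply, AddCircle.toCircle_nsmul]
  | zero => exact ⟨0, by simp⟩
  | add f g _ _ hf hg =>
    obtain ⟨P, hP⟩ := hf a
    obtain ⟨Q, hQ⟩ := hg a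
    refine ⟨P + Q, fun x => ?_⟩
    rw [ContinuousMap.add_apply, mul_add, Complex.add_re, hP, hQ, Polynomial.eval_add,
      Complex.add_re]
  | smul b f _ hf =>
    obtain ⟨P, hP⟩ := hf (a * b)
    exact ⟨P, fun x => by rw [← hP, ContinuousMap.smul_apply, smul_eq_mul, mul_assoc]⟩

lemma exists_polynomial_re_near (f : C(Circle, ℝ)) {ε : ℝ} (hε : 0 < ε) :
    ∃ P : Polynomial ℂ, ∀ w : Circle, |(P.eval (w : ℂ)).re - f w| < ε := by
  let g : C(UnitAddCircle, ℂ) :=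
    ⟨fun x => f (AddCircle.toCircle x), by have := AddCircle.continuous_toCircle (T := 1); fun_prop⟩
  have hg : g ∈ closure (Submodule.span ℂ (range (@fourier 1)) : Set C(UnitAddCircle, ℂ)) := by
    rw [← Submodule.topologicalClosure_coe, span_fourier_closure_eq_top]
    trivial
  obtain ⟨q, hq, hgq⟩ := Metric.mem_closure_iff.1 hg ε hε
  obtain ⟨P, hP⟩ := exists_polynomial_re_mul_eq hq 1
  refine ⟨P, fun w => ?_⟩
  obtain ⟨x, rfl⟩ := (AddCircle.homeomorphCircle one_ne_zero).surjective w
  rw [AddCircle.homeomorphCircle_apply, ← hP, one_mul]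
  calc |(q x).re - f (AddCircle.toCircle x)| = |(q x - g x).re| := rfl
    _ ≤ dist (g x) (q x) := by rw [dist_comm, dist_eq_norm]; exact Complex.abs_re_le_norm _
    _ ≤ dist g q := ContinuousMap.dist_apply_le_dist x
    _ < ε := hgq

lemma exists_harmonicMVP_between_on_sphere {f : ℂ → ℝ} {c : ℂ} {r : ℝ} (hr : 0 < r)
    (hf : ContinuousOn f (sphere c r)) {ε : ℝ} (hε : 0 < ε) :
    ∃ F : ℂ → ℝ, HarmonicMVP F univ ∧ ∀ z ∈ sphere c r, f z < F z ∧ F z < f z + ε := by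
  have hr' : (r : ℂ) ≠ 0 := Complex.ofReal_ne_zero.2 hr.ne'
  let g : C(Circle, ℝ) := ⟨fun w => f (c + r * w) + ε / 2, by
    refine .add_const (hf.comp_continuous (by fun_prop) fun w => ?_) _
    simp [Circle.norm_coe, abs_of_pos hr]⟩
  obtain ⟨P, hP⟩ := exists_polynomial_re_near g (half_pos hε)
  refine ⟨fun z => (P.eval ((z - c) / r)).re,
    .re (P.differentiable.comp (by fun_prop : Differentiable ℂ fun z : ℂ => (z - c) / r)) univ,
    fun z hz => ?_⟩
  have hw : ‖(z - c) / r‖ = 1 := by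
    rw [norm_div, mem_sphere_iff_norm.1 hz, Complex.norm_of_nonneg hr.le, div_self hr.ne']
  have hnear : |(P.eval ((z - c) / r)).re - (f z + ε / 2)| < ε / 2 := by
    simpa [g, mul_div_cancel₀ _ hr'] using hP ⟨(z - c) / r, mem_sphere_zero_iff_norm.2 hw⟩
  obtain ⟨hlow, hhigh⟩ := abs_lt.1 hnear
  exact ⟨by linarith, by linarith⟩

end Harmonic

lemma circleAverage_le_sub_mul_volume {f : ℂ → ℝ} {c : ℂ} {r M k : ℝ}
    (hf : CircleIntegrable f c r) (hM : ∀ z ∈ sphere c |r|, f z ≤ M) {K : Set ℝ}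
    (hK : MeasurableSet K) (hK_sub : K ⊆ Ioc 0 (2 * Real.pi))
    (hKM : ∀ θ ∈ K, f (circleMap c r θ) ≤ M - k) :
    Real.circleAverage f c r ≤ M - (2 * Real.pi)⁻¹ * k * volume.real K := by
  have hle (θ : ℝ) : f (circleMap c r θ) ≤ M - K.indicator (fun _ => k) θ := by
    by_cases hθ : θ ∈ K
    · simpa only [indicator_of_mem hθ] using hKM θ hθ
    · simpa only [indicator_of_notMem hθ, sub_zero] using hM _ (circleMap_mem_sphere' c r θ)
  have hKi : IntervalIntegrable (K.indicator fun _ => k) volume 0 (2 * Real.pi) :=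
    ((integrable_indicator_iff hK).2 (integrableOn_const
      (measure_ne_top_of_subset hK_sub measure_Ioc_lt_top.ne))).intervalIntegrable
  have hint : ∫ θ in (0 : ℝ)..2 * Real.pi, K.indicator (fun _ => k) θ = volume.real K * k := by
    rw [intervalIntegral.integral_of_le Real.two_pi_pos.le, setIntegral_indicator hK,
      inter_eq_right.2 hK_sub, setIntegral_const, smul_eq_mul]
  calc Real.circleAverage f c r
      ≤ (2 * Real.pi)⁻¹ * ∫ θ in (0 : ℝ)..2 * Real.pi, (M - K.indicator (fun _ => k) θ) := by
        rw [Real.circleAverage_def, smul_eq_mul]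
        exact mul_le_mul_of_nonneg_left (intervalIntegral.integral_mono Real.two_pi_pos.le
          hf (intervalIntegrable_const.sub hKi) hle) (by positivity)
    _ = M - (2 * Real.pi)⁻¹ * k * volume.real K := by
        rw [intervalIntegral.integral_sub intervalIntegrable_const hKi, hint,
          intervalIntegral.integral_const, sub_zero, smul_eq_mul]
        field_simp

namespace SubharmonicOn

variable {u v : ℂ → EReal} {U V : Set ℂ} {c : ℂ} {r : ℝ}

lemma mono (hu : SubharmonicOn u U) (hVU : V ⊆ U) : SubharmonicOn u V :=
  ⟨hu.1.mono hVU, fun z hz => hu.2.1 z (hVU hz), fun c r hr hs => hu.2.2 c r hr (hs.trans hVU)⟩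

lemma of_forall_isCompact
    (h : ∀ K ⊆ U, IsCompact K → ∃ V, IsOpen V ∧ K ⊆ V ∧ SubharmonicOn u V) :
    SubharmonicOn u U := by
  refine ⟨upperSemicontinuousOn_of_forall_exists_isOpen fun z hz => ?_, fun z hz => ?_,
    fun c r hr hs => ?_⟩
  · obtain ⟨V, hVo, hzV, hV⟩ := h {z} (singleton_subset_iff.2 hz) isCompact_singleton
    exact ⟨V, hVo, singleton_subset_iff.1 hzV, hV.1⟩
  · obtain ⟨V, -, hzV, hV⟩ := h {z} (singleton_subset_iff.2 hz) isCompact_singleton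
    exact hV.2.1 z (singleton_subset_iff.1 hzV)
  · obtain ⟨V, -, hsV, hV⟩ := h _ hs (isCompact_closedBall c r)
    exact hV.2.2 c r hr hsV

lemma const_mul (hu : SubharmonicOn u U) {t : ℝ} (ht : 0 < t) :
    SubharmonicOn (fun z => t * u z) U := by
  have ht' : (0 : EReal) < t := EReal.coe_pos.2 ht
  have hle {x : EReal} {y : ℝ} : t * x ≤ y ↔ x ≤ ((y / t : ℝ) : EReal) := by
    rw [EReal.coe_div, EReal.le_div_iff_mul_le ht' (EReal.coe_ne_top t), mul_comm]
  refine ⟨upperSemicontinuousOn_const_mul hu.1 ht, fun z hz => ?_, fun c r hr hs h hh hsphere => ?_⟩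
  · obtain ⟨M, hM, -⟩ := EReal.lt_iff_exists_real_btwn.1 (hu.2.1 z hz)
    refine (hle (y := t * M).2 ?_).trans_lt (EReal.coe_lt_top _)
    rw [mul_div_cancel_left₀ _ ht.ne']
    exact hM.le
  · simp only [hle] at hsphere ⊢
    exact hu.2.2 c r hr hs _ (hh.div_const t) hsphere

lemma add_const (hu : SubharmonicOn u U) (k : ℝ) : SubharmonicOn (fun z => u z + k) U := by
  have hle {x : EReal} {y : ℝ} : x + k ≤ y ↔ x ≤ ((y - k : ℝ) : EReal) := by
    rw [EReal.coe_sub]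
    exact (EReal.le_sub_iff_add_le (.inl (EReal.coe_ne_bot k)) (.inl (EReal.coe_ne_top k))).symm
  refine ⟨upperSemicontinuousOn_add hu.1 upperSemicontinuousOn_const hu.2.1
    fun z _ => EReal.coe_lt_top k, fun z hz => EReal.add_lt_top (hu.2.1 z hz).ne
    (EReal.coe_ne_top k), fun c r hr hs h hh hsphere => ?_⟩
  simp only [hle] at hsphere ⊢
  exact hu.2.2 c r hr hs _ (hh.sub (.const k _)) hsphere

lemma add (hu : SubharmonicOn u U) (hv : SubharmonicOn v U) :
    SubharmonicOn (fun z => u z + v z) U := by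
  refine ⟨upperSemicontinuousOn_add hu.1 hv.1 hu.2.1 hv.2.1,
    fun z hz => EReal.add_lt_top (hu.2.1 z hz).ne (hv.2.1 z hz).ne,
    fun c r hr hs h hh hsphere z hz => EReal.le_of_forall_lt_iff_le.1 fun y hy => ?_⟩
  have hS : sphere c r ⊆ U := sphere_subset_closedBall.trans hs
  obtain ⟨ε, hε, hεy⟩ : ∃ ε > 0, h z + 2 * ε = y :=
    ⟨(y - h z) / 2, half_pos (sub_pos.2 (EReal.coe_lt_coe_iff.1 hy)), by ring⟩
  obtain ⟨g, hg⟩ := exists_continuousMap_split isClosed_sphere (hu.1.mono hS) (hv.1.mono hS)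
    (fun w hw => hu.2.1 w (hS hw)) (fun w hw => hv.2.1 w (hS hw))
    ((hh.1.mono sphere_subset_closedBall).add_const ε)
    fun w hw => (hsphere w hw).trans_lt (EReal.coe_lt_coe (lt_add_of_pos_right (h w) hε))
  obtain ⟨F, hF, hgF⟩ := exists_harmonicMVP_between_on_sphere hr g.continuous.continuousOn hε
  have hFb := hF.mono (subset_univ (closedBall c r))
  have huF : u z ≤ F z := hu.2.2 c r hr hs F hFb
    (fun w hw => (hg w hw).1.le.trans (EReal.coe_le_coe (hgF w hw).1.le)) z hz
  have hvF : v z ≤ ((h z + 2 * ε - F z : ℝ) : EReal) :=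
    hv.2.2 c r hr hs _ ((hh.add (.const (2 * ε) _)).sub hFb)
      (fun w hw => (hg w hw).2.le.trans (EReal.coe_le_coe (by linarith [(hgF w hw).2]))) z hz
  calc u z + v z ≤ F z + ((h z + 2 * ε - F z : ℝ) : EReal) := add_le_add huF hvF
    _ = y := by rw [← EReal.coe_add, add_sub_cancel, hεy]

lemma of_isGLB {ι : Type*} [Nonempty ι] [Preorder ι] [IsDirectedOrder ι] {S : ι → ℂ → EReal}
    (hS : ∀ i, SubharmonicOn (S i) U) (hanti : ∀ z ∈ U, Antitone fun i => S i z)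
    (hu : ∀ z ∈ U, IsGLB (range fun i => S i z) (u z)) : SubharmonicOn u U := by
  have hle (i : ι) {z : ℂ} (hz : z ∈ U) : u z ≤ S i z := (hu z hz).1 (mem_range_self i)
  refine ⟨upperSemicontinuousOn_of_isGLB (fun i => (hS i).1) hu,
    fun z hz => (hle (Classical.arbitrary ι) hz).trans_lt ((hS _).2.1 z hz),
    fun c r hr hs h hh hsphere z hz => EReal.le_of_forall_lt_iff_le.1 fun y hy => ?_⟩
  have hsub : sphere c r ⊆ U := sphere_subset_closedBall.trans hs
  have hε : 0 < y - h z := sub_pos.2 (EReal.coe_lt_coe_iff.1 hy)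
  have hhε : HarmonicMVP (fun w => h w + (y - h z)) (closedBall c r) := hh.add (.const _ _)
  obtain ⟨i, hi⟩ := exists_forall_mem_lt_of_isGLB (isCompact_sphere c r)
    (fun i => (hS i).1.mono hsub)
    (continuous_coe_real_ereal.comp_continuousOn
      (hhε.1.mono sphere_subset_closedBall)).lowerSemicontinuousOn
    (fun w hw => hanti w (hsub hw)) (fun w hw => hu w (hsub hw))
    fun w hw => (hsphere w hw).trans_lt (EReal.coe_lt_coe (lt_add_of_pos_right (h w) hε))
  calc u z ≤ S i z := hle i (hs (ball_subset_closedBall hz))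
    _ ≤ ((h z + (y - h z) : ℝ) : EReal) :=
        (hS i).2.2 c r hr hs _ hhε (fun w hw => (hi w hw).le) z hz
    _ = y := by rw [add_sub_cancel]

lemma le_circleAverage (hu : SubharmonicOn u U) (hr : 0 < r) (hs : closedBall c r ⊆ U)
    {f : ℂ → ℝ} (hf : ContinuousOn f (sphere c r)) (huf : ∀ z ∈ sphere c r, u z ≤ f z) :
    u c ≤ Real.circleAverage f c r := by
  refine EReal.le_of_forall_lt_iff_le.1 fun y hy => ?_
  have hε : 0 < y - Real.circleAverage f c r := sub_pos.2 (EReal.coe_lt_coe_iff.1 hy)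
  obtain ⟨F, hF, hfF⟩ := exists_harmonicMVP_between_on_sphere hr hf hε
  refine (hu.2.2 c r hr hs F (hF.mono (subset_univ _))
    (fun z hz => (huf z hz).trans (EReal.coe_le_coe (hfF z hz).1.le)) c (mem_ball_self hr)).trans ?_
  have hfi := hf.circleIntegrable hr.le
  refine EReal.coe_le_coe ?_
  calc F c = Real.circleAverage F c r := (hF.circleAverage_eq hr (subset_univ _)).symm
    _ ≤ Real.circleAverage (fun z => f z + (y - Real.circleAverage f c r)) c r :=
        Real.circleAverage_mono (hF.circleIntegrable hr.le (subset_univ _))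
          (hfi.add (circleIntegrable_const _ c r))
          fun z hz => (hfF z (abs_of_pos hr ▸ hz)).2.le
    _ = y := by
        rw [Real.circleAverage_fun_add hfi (circleIntegrable_const _ c r),
          Real.circleAverage_const, add_sub_cancel]

lemma le_sub_mul_volume (hu : SubharmonicOn u U) (hr : 0 < r) (hs : closedBall c r ⊆ U)
    {M k : ℝ} (hk : 0 ≤ k) (hM : ∀ z ∈ sphere c r, u z < M) {K : Set ℝ} (hK : IsCompact K)
    (hK_sub : K ⊆ Ioc 0 (2 * Real.pi))
    (hKM : ∀ θ ∈ K, u (circleMap c r θ) < ((M - k : ℝ) : EReal)) :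
    u c ≤ ((M - (2 * Real.pi)⁻¹ * k * volume.real K : ℝ) : EReal) := by
  let w : ℂ → ℝ := fun z => M + (circleMap c r '' K).indicator (fun _ => -k) z
  have hw : LowerSemicontinuous fun z => (w z : EReal) :=
    continuous_coe_real_ereal.comp_lowerSemicontinuous
      (lowerSemicontinuous_const.add (IsClosed.lowerSemicontinuous_indicator
        (hK.image (continuous_circleMap c r)).isClosed (neg_nonpos.2 hk)))
      EReal.coe_strictMono.monotone
  have huw : ∀ z ∈ sphere c r, u z < w z := by
    intro z hz
    by_cases hzA : z ∈ circleMap c r '' K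
    · obtain ⟨θ, hθ, rfl⟩ := hzA
      simpa [w, mem_image_of_mem _ hθ, ← sub_eq_add_neg] using hKM θ hθ
    · simpa [w, hzA] using hM z hz
  obtain ⟨g, hg⟩ := exists_continuousMap_between isClosed_sphere
    (hu.1.mono (sphere_subset_closedBall.trans hs)) (hw.lowerSemicontinuousOn _) huw
  have hgM : ∀ z ∈ sphere c r, g z ≤ M := fun z hz =>
    (EReal.coe_lt_coe_iff.1 (hg z hz).2).le.trans
      (add_le_of_nonpos_right (indicator_nonpos (fun _ _ => neg_nonpos.2 hk) z))
  have hgK : ∀ θ ∈ K, g (circleMap c r θ) ≤ M - k := fun θ hθ => by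
    refine (EReal.coe_lt_coe_iff.1 (hg _ (circleMap_mem_sphere c hr.le θ)).2).le.trans_eq ?_
    simp only [w, indicator_of_mem (mem_image_of_mem _ hθ), ← sub_eq_add_neg]
  have hgi : CircleIntegrable g c r := g.continuous.continuousOn.circleIntegrable hr.le
  calc u c ≤ Real.circleAverage g c r :=
        hu.le_circleAverage hr hs g.continuous.continuousOn fun z hz => (hg z hz).1.le
    _ ≤ ((M - (2 * Real.pi)⁻¹ * k * volume.real K : ℝ) : EReal) :=
        EReal.coe_le_coe (circleAverage_le_sub_mul_volume hgi (by rwa [abs_of_pos hr])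
          hK.measurableSet hK_sub hgK)

lemma ae_circleMap_ne_bot (hu : SubharmonicOn u U) (hr : 0 < r) (hs : closedBall c r ⊆ U)
    (hc : u c ≠ ⊥) :
    ∀ᵐ θ ∂volume.restrict (Ioc 0 (2 * Real.pi)), u (circleMap c r θ) ≠ ⊥ := by
  have hsphere : sphere c r ⊆ U := sphere_subset_closedBall.trans hs
  have husc : UpperSemicontinuous fun θ => u (circleMap c r θ) :=
    upperSemicontinuousOn_univ_iff.1 (hu.1.comp (continuous_circleMap c r).continuousOn
      fun θ _ => hsphere (circleMap_mem_sphere c hr.le θ))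
  have hmeas : MeasurableSet {θ | u (circleMap c r θ) = ⊥} :=
    husc.measurable (measurableSet_singleton ⊥)
  rw [ae_restrict_iff' measurableSet_Ioc]
  by_contra hpos
  obtain ⟨K, hK_sub, hK, hK_pos⟩ := (measurableSet_Ioc.inter hmeas).exists_lt_isCompact
    (pos_iff_ne_zero.2 fun hzero => hpos (measure_eq_zero_iff_ae_notMem.1 hzero |>.mono
      fun θ hθ hIoc hbot => hθ ⟨hIoc, hbot⟩))
  obtain ⟨M, hM⟩ := exists_real_forall_mem_lt (isCompact_sphere c r) (hu.1.mono hsphere)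
    fun z hz => hu.2.1 z (hsphere hz)
  obtain ⟨x, hxu⟩ : ∃ x : ℝ, (x : EReal) < u c :=
    (EReal.lt_iff_exists_real_btwn.1 (bot_lt_iff_ne_bot.2 hc)).imp fun _ h => h.2
  have hδ : 0 < (2 * Real.pi)⁻¹ * volume.real K :=
    mul_pos (by positivity) (ENNReal.toReal_pos hK_pos.ne' hK.measure_ne_top)
  obtain ⟨k, hk⟩ := exists_nat_gt ((M - x) / ((2 * Real.pi)⁻¹ * volume.real K))
  have hle := hu.le_sub_mul_volume hr hs k.cast_nonneg hM hK (fun θ hθ => (hK_sub hθ).1)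
    fun θ hθ => (hK_sub hθ).2.trans_lt (EReal.bot_lt_coe (M - k))
  have hx : x < M - (2 * Real.pi)⁻¹ * k * volume.real K :=
    EReal.coe_lt_coe_iff.1 (hxu.trans_le hle)
  linarith [(div_lt_iff₀ hδ).1 hk]

end SubharmonicOn

lemma quasiMeasurePreserving_smul_sub {E : Type*} [NormedAddCommGroup E] [NormedSpace ℂ E]
    [FiniteDimensional ℂ E] [MeasurableSpace E] [BorelSpace E] {μ : Measure E}
    [μ.IsAddHaarMeasure] {w : ℂ} (hw : w ≠ 0) (a : E) :
    Measure.QuasiMeasurePreserving (fun z => w • (z - a)) μ μ := by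
  let L : E ≃ₗ[ℝ] E := DistribMulAction.toLinearEquiv ℝ E (Units.mk0 w hw)
  have hL : Measure.QuasiMeasurePreserving (fun z : E => w • z) μ μ :=
    Measure.LinearMap.quasiMeasurePreserving μ L.toLinearMap (LinearEquiv.isUnit_det' L).ne_zero
  exact hL.comp (measurePreserving_sub_right μ a).quasiMeasurePreserving

namespace PlurisubharmonicOn

variable {n : ℕ} {φ ψ : (Fin n → ℂ) → EReal} {Ω Ω' : Set (Fin n → ℂ)} {a : Fin n → ℂ}

lemma lt_top (hφ : PlurisubharmonicOn φ Ω) (ha : a ∈ Ω) : φ a < ⊤ := by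
  simpa using (hφ.2 a 0).2.1 0 (by simpa using ha)

lemma mono (hφ : PlurisubharmonicOn φ Ω) (h : Ω' ⊆ Ω) : PlurisubharmonicOn φ Ω' :=
  ⟨hφ.1.mono h, fun a b => (hφ.2 a b).mono fun _ hz => h hz⟩

lemma of_forall_isCompact
    (h : ∀ K ⊆ Ω, IsCompact K → ∃ V, IsOpen V ∧ K ⊆ V ∧ PlurisubharmonicOn φ V) :
    PlurisubharmonicOn φ Ω := by
  refine ⟨upperSemicontinuousOn_of_forall_exists_isOpen fun z hz => ?_, fun a b =>
    SubharmonicOn.of_forall_isCompact fun K hK hKc => ?_⟩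
  · obtain ⟨V, hVo, hzV, hV⟩ := h {z} (singleton_subset_iff.2 hz) isCompact_singleton
    exact ⟨V, hVo, singleton_subset_iff.1 hzV, hV.1⟩
  · have hline : Continuous fun z : ℂ => a + z • b := by fun_prop
    obtain ⟨V, hVo, hKV, hV⟩ := h _ (image_subset_iff.2 hK) (hKc.image hline)
    exact ⟨_, hVo.preimage hline, image_subset_iff.1 hKV, hV.2 a b⟩

lemma const_mul (hφ : PlurisubharmonicOn φ Ω) {t : ℝ} (ht : 0 < t) :
    PlurisubharmonicOn (fun z => t * φ z) Ω :=
  ⟨upperSemicontinuousOn_const_mul hφ.1 ht, fun a b => (hφ.2 a b).const_mul ht⟩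

lemma add_const (hφ : PlurisubharmonicOn φ Ω) (k : ℝ) :
    PlurisubharmonicOn (fun z => φ z + k) Ω :=
  ⟨upperSemicontinuousOn_add hφ.1 upperSemicontinuousOn_const (fun _ => hφ.lt_top)
    fun _ _ => EReal.coe_lt_top k, fun a b => (hφ.2 a b).add_const k⟩

lemma add (hφ : PlurisubharmonicOn φ Ω) (hψ : PlurisubharmonicOn ψ Ω) :
    PlurisubharmonicOn (fun z => φ z + ψ z) Ω :=
  ⟨upperSemicontinuousOn_add hφ.1 hψ.1 (fun _ => hφ.lt_top) fun _ => hψ.lt_top,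
    fun a b => (hφ.2 a b).add (hψ.2 a b)⟩

lemma sum {ι : Type*} {s : Finset ι} (hs : s.Nonempty) {φ : ι → (Fin n → ℂ) → EReal}
    (hφ : ∀ i ∈ s, PlurisubharmonicOn (φ i) Ω) :
    PlurisubharmonicOn (fun z => ∑ i ∈ s, φ i z) Ω := by
  induction hs using Finset.Nonempty.cons_induction with
  | singleton i => simpa only [Finset.sum_singleton] using hφ i (Finset.mem_singleton_self i)
  | cons i s hi _ ih =>
    rw [Finset.forall_mem_cons] at hφ
    simpa only [Finset.sum_cons] using hφ.1.add (ih hφ.2)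

lemma of_isGLB {ι : Type*} [Nonempty ι] [Preorder ι] [IsDirectedOrder ι]
    {S : ι → (Fin n → ℂ) → EReal} (hS : ∀ i, PlurisubharmonicOn (S i) Ω)
    (hanti : ∀ z ∈ Ω, Antitone fun i => S i z)
    (hφ : ∀ z ∈ Ω, IsGLB (range fun i => S i z) (φ z)) : PlurisubharmonicOn φ Ω :=
  ⟨upperSemicontinuousOn_of_isGLB (fun i => (hS i).1) hφ, fun a b =>
    .of_isGLB (fun i => (hS i).2 a b) (fun _ hz => hanti _ hz) fun _ hz => hφ _ hz⟩

lemma ae_ne_bot (hφ : PlurisubharmonicOn φ univ) (hne : ¬ ∀ z, φ z = ⊥) : ∀ᵐ z, φ z ≠ ⊥ := by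
  obtain ⟨a, ha⟩ := not_forall.1 hne
  have hcircle : ∀ᵐ b : Fin n → ℂ, ∀ᵐ θ ∂volume.restrict (Ioc 0 (2 * Real.pi)),
      φ (a + circleMap 0 1 θ • b) ≠ ⊥ := ae_of_all _ fun b =>
    (hφ.2 a b).ae_circleMap_ne_bot one_pos (fun _ _ => mem_univ _) (by simpa using ha)
  have hmeas : MeasurableSet {p : (Fin n → ℂ) × ℝ | φ (a + circleMap 0 1 p.2 • p.1) ≠ ⊥} := by
    have hcont : Continuous fun p : (Fin n → ℂ) × ℝ => a + circleMap 0 1 p.2 • p.1 := by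
      fun_prop
    exact (upperSemicontinuousOn_univ_iff.1 hφ.1).measurable.comp hcont.measurable
      (measurableSet_singleton ⊥).compl
  rw [Measure.ae_ae_comm hmeas] at hcircle
  have : NeBot (ae (volume.restrict (Ioc 0 (2 * Real.pi)))) := by
    rw [ae_neBot, Ne, Measure.restrict_eq_zero, Real.volume_Ioc]
    simp [Real.pi_pos]
  obtain ⟨θ, hθ⟩ := hcircle.exists
  have hw : circleMap 0 1 θ ≠ 0 := circleMap_ne_center one_ne_zero
  filter_upwards [(quasiMeasurePreserving_smul_sub (inv_ne_zero hw) a).ae hθ] with z hz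
  rwa [smul_inv_smul₀ hw, add_sub_cancel] at hz

lemma exists_normalized (hφ : PlurisubharmonicOn φ Ω) {K : Set (Fin n → ℂ)} (hK : IsCompact K)
    (hKΩ : K ⊆ Ω) (haΩ : a ∈ Ω) (ha : φ a ≠ ⊥) {ε : ℝ} (hε : 0 < ε) :
    ∃ ψ, PlurisubharmonicOn ψ Ω ∧ (∀ z ∈ K, ψ z ≤ 0) ∧ ((-ε : ℝ) : EReal) ≤ ψ a ∧
      ∀ z, φ z = ⊥ → ψ z = ⊥ := by
  have hsub : insert a K ⊆ Ω := insert_subset haΩ hKΩ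
  obtain ⟨M, hM⟩ := exists_real_forall_mem_lt (hK.insert a) (hφ.1.mono hsub)
    fun z hz => hφ.lt_top (hsub hz)
  obtain ⟨v, hv⟩ : ∃ v : ℝ, (v : EReal) = φ a := ⟨_, EReal.coe_toReal (hφ.lt_top haΩ).ne ha⟩
  have hvM : 0 < M - v := sub_pos.2 (EReal.coe_lt_coe_iff.1 (hv ▸ hM a (mem_insert a K)))
  have ht : 0 < ε / (M - v) := div_pos hε hvM
  refine ⟨_, (hφ.add_const (-M)).const_mul ht, fun z hz => ?_, ?_, fun z hz => ?_⟩
  · refine mul_nonpos_of_nonneg_of_nonpos ?_ ?_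
    · exact EReal.coe_nonneg.2 ht.le
    · rw [EReal.coe_neg, ← sub_eq_add_neg]
      exact EReal.sub_nonpos.2 (hM z (mem_insert_of_mem a hz)).le
  · rw [← hv]
    norm_cast
    refine le_of_eq ?_
    field_simp
    ring
  · simp only [hz, EReal.bot_add, EReal.coe_mul_bot_of_pos ht]

end PlurisubharmonicOn

lemma limsup_sum_range_eq_bot {f : ℕ → EReal} {i : ℕ} (hi : f i = ⊥) :
    limsup (fun k => ∑ j ∈ Finset.range k, f j) atTop = ⊥ := by
  refine (tendsto_const_nhds.congr' ?_).limsup_eq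
  filter_upwards [eventually_gt_atTop i] with k hk
  rw [← Finset.add_sum_erase _ _ (Finset.mem_range.2 hk), hi, EReal.bot_add]

lemma limsup_sum_range_ne_bot {f : ℕ → EReal} {c : ℕ → ℝ} (hc : Summable c)
    (hcf : ∀ i, (c i : EReal) ≤ f i) :
    limsup (fun k => ∑ j ∈ Finset.range k, f j) atTop ≠ ⊥ := by
  have hlim : limsup (fun k => ((∑ j ∈ Finset.range k, c j : ℝ) : EReal)) atTop =
      ((∑' j, c j : ℝ) : EReal) :=
    ((continuous_coe_real_ereal.tendsto _).comp hc.hasSum.tendsto_sum_nat).limsup_eq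
  refine ne_bot_of_le_ne_bot (EReal.coe_ne_bot (∑' j, c j)) (hlim ▸ limsup_le_limsup ?_)
  refine .of_forall fun k => ?_
  exact Finset.sum_hom_rel (r := fun (x : ℝ) (y : EReal) => (x : EReal) ≤ y) le_rfl
    fun j _ _ h => (EReal.coe_add ..).trans_le (add_le_add (hcf j) h)

lemma antitone_sum_range_add {M : Type*} [AddCommMonoid M] [Preorder M]
    [AddLeftMono M] {f : ℕ → M} {N : ℕ} (hf : ∀ i ≥ N, f i ≤ 0) :
    Antitone fun k => ∑ j ∈ Finset.range (k + N), f j :=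
  antitone_nat_of_succ_le fun k => by
    rw [Nat.add_right_comm, Finset.sum_range_succ]
    exact add_le_of_nonpos_right (hf _ (Nat.le_add_left N k))

lemma isGLB_limsup_of_antitone_add {α : Type*} [CompleteLinearOrder α] [TopologicalSpace α]
    [OrderTopology α] {f : ℕ → α} {N : ℕ} (hf : Antitone fun k => f (k + N)) :
    IsGLB (range fun k => f (k + N)) (limsup f atTop) := by
  rw [← limsup_nat_add f N, (tendsto_atTop_iInf hf).limsup_eq]
  exact isGLB_iInf

lemma PlurisubharmonicOn.limsup_sum_range {n : ℕ} {ψ : ℕ → (Fin n → ℂ) → EReal}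
    {Ω : Set (Fin n → ℂ)} (hΩ : IsOpen Ω) (hψ : ∀ i, PlurisubharmonicOn (ψ i) Ω)
    (hneg : ∀ K ⊆ Ω, IsCompact K → ∀ᶠ i in atTop, ∀ z ∈ K, ψ i z ≤ 0) :
    PlurisubharmonicOn (fun z => limsup (fun k => ∑ i ∈ Finset.range k, ψ i z) atTop) Ω := by
  refine .of_forall_isCompact fun K hKΩ hK => ?_
  obtain ⟨K', hK', hKK', hK'Ω⟩ := exists_compact_between hK hΩ hKΩ
  obtain ⟨N, hN⟩ := eventually_atTop.1 (hneg K' hK'Ω hK')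
  have hanti : ∀ z ∈ interior K', Antitone fun k => ∑ i ∈ Finset.range (k + (N + 1)), ψ i z :=
    fun z hz => antitone_sum_range_add fun i hi =>
      hN i ((Nat.le_succ N).trans hi) z (interior_subset hz)
  exact ⟨_, isOpen_interior, hKK', .of_isGLB
    (S := fun k z => ∑ i ∈ Finset.range (k + (N + 1)), ψ i z)
    (fun k => .sum Finset.nonempty_range_add_one fun i _ =>
      (hψ i).mono (interior_subset.trans hK'Ω))
    hanti fun z hz => isGLB_limsup_of_antitone_add
      (f := fun k => ∑ i ∈ Finset.range k, ψ i z) (hanti z hz)⟩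

/-- A countable union of pluripolar subsets of `ℂⁿ` is pluripolar. -/
theorem countable_union_pluripolar {n : ℕ} (E : ℕ → Set (Fin n → ℂ))
    (hE : ∀ i, Pluripolar (E i)) : Pluripolar (⋃ i, E i) := by
  choose φ hφ hne hbot using hE
  obtain ⟨a, ha⟩ := (ae_all_iff.2 fun i => (hφ i).ae_ne_bot (hne i)).exists
  let K : CompactExhaustion (Fin n → ℂ) := .choice _
  have hnorm (i : ℕ) := (hφ i).exists_normalized (K.isCompact i) (subset_univ _) (mem_univ a)
    (ha i) (pow_pos one_half_pos i)
  choose ψ hψ hneg hlow hψbot using hnorm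
  refine ⟨_, .limsup_sum_range isOpen_univ hψ fun C _ hC => ?_,
    fun h => limsup_sum_range_ne_bot summable_geometric_two.neg hlow (h a), fun z hz => ?_⟩
  · obtain ⟨N, hCN⟩ := K.exists_superset_of_isCompact hC
    filter_upwards [eventually_ge_atTop N] with i hi z hz
    exact hneg i z (K.subset hi (hCN hz))
  · obtain ⟨i, hi⟩ := mem_iUnion.1 hz
    exact limsup_sum_range_eq_bot (hψbot i z (hbot i z hi))
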